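/- arXiv:1501.01489 — 2 statements merged into one kernel-verified Lean document; each statement's English description precedes it below -/
import Mathlib

section
/- Let C_n be a chord diagram chosen uniformly at random from all chord diagrams of size n. With high probability (probability tending to 1 as n→∞), C_n is monolithic: every chord of C_n not lying in the connected component (with respect to the crossing relation) of the chord containing endpoint 1 is a simple chord, and there is no index i (taken modulo 2n) such that both ⟨i,i+1⟩ and ⟨i+2,i+3⟩ are chords of C_n. -/
open scoped Classical
open Finset Filter

/-- A chord diagram of size `n`: a fixed-point-free involution of the `2n`
endpoints `0, 1, …, 2n-1` (endpoint `i` here corresponds to the label `i+1`). -/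
abbrev ChordDiagram (n : ℕ) :=
  {f : Fin (2*n) → Fin (2*n) // (∀ i, f (f i) = i) ∧ ∀ i, f i ≠ i}

/-- `c` lies strictly between `a` and `b`. -/
def Between {m : ℕ} (a b c : Fin m) : Prop := min a b < c ∧ c < max a b

/-- The chord of `C` containing endpoint `x` crosses the chord containing endpoint `u`:
exactly one of the two endpoints `u`, `C u` lies strictly between `x` and `C x`. -/
def Crosses {n : ℕ} (C : ChordDiagram n) (x u : Fin (2*n)) : Prop :=
  Xor' (Between x (C.1 x) u) (Between x (C.1 x) (C.1 u))

/-- Uniform probability of an event over all chord diagrams of size `n`. -/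
noncomputable def prob (n : ℕ) (E : ChordDiagram n → Prop) : ℝ :=
  ((Finset.univ.filter E).card : ℝ) / ((Finset.univ : Finset (ChordDiagram n)).card : ℝ)

/-- The degree of the chord of `C` containing endpoint `x`: the number of chords
crossing it (each chord counted once via its smaller endpoint). -/
noncomputable def chordDegree {n : ℕ} (C : ChordDiagram n) (x : Fin (2*n)) : ℕ :=
  (Finset.univ.filter fun u => u < C.1 u ∧ Crosses C x u).card

/-- The length of the chord of `C` containing endpoint `x`: the number of endpoints
on the smaller of the two arcs it determines. -/
def chordLength {n : ℕ} (C : ChordDiagram n) (x : Fin (2*n)) : ℕ :=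
  min (max (x:ℕ) (C.1 x : ℕ) - min (x:ℕ) (C.1 x : ℕ) - 1)
      (2*n - (max (x:ℕ) (C.1 x : ℕ) - min (x:ℕ) (C.1 x : ℕ)) - 1)

/-- Degree of the chord containing endpoint `1` (index `0`). -/
noncomputable def degreeC1 (n : ℕ) (C : ChordDiagram n) : ℕ :=
  if h : 0 < n then chordDegree C ⟨0, by omega⟩ else 0

/-- Length of the chord containing endpoint `1` (index `0`). -/
noncomputable def lengthC1 (n : ℕ) (C : ChordDiagram n) : ℕ :=
  if h : 0 < n then chordLength C ⟨0, by omega⟩ else 0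

/-- Membership in the component (w.r.t. the crossing relation) of the chord
containing the root endpoint. -/
def InRootComponent {n : ℕ} (C : ChordDiagram n) (root x : Fin (2*n)) : Prop :=
  x = root ∨ x = C.1 root ∨ Relation.ReflTransGen (fun a b => Crosses C a b) root x

/-- The chord containing `x` is simple: it joins two (cyclically) consecutive endpoints. -/
def IsSimple {n : ℕ} (C : ChordDiagram n) (x : Fin (2*n)) : Prop :=
  (C.1 x : ℕ) = ((x : ℕ) + 1) % (2*n) ∨ (x : ℕ) = ((C.1 x : ℕ) + 1) % (2*n)

/-- `C` is monolithic (with respect to `root`): every chord not in the root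
component is simple, and no two simple chords are next to each other. -/
def Monolithic {n : ℕ} (C : ChordDiagram n) (root : Fin (2*n)) : Prop :=
  (∀ x : Fin (2*n), ¬ InRootComponent C root x → IsSimple C x) ∧
  ¬ ∃ i : Fin (2*n), (C.1 i : ℕ) = ((i : ℕ) + 1) % (2*n) ∧
      ∃ j : Fin (2*n), (j : ℕ) = ((i : ℕ) + 2) % (2*n) ∧ (C.1 j : ℕ) = ((i : ℕ) + 3) % (2*n)

/-- `L_j`: the number of chords of length `j` in `C`. -/
noncomputable def lengthCount (n : ℕ) (j : ℕ) (C : ChordDiagram n) : ℕ :=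
  (Finset.univ.filter fun x : Fin (2*n) => x < C.1 x ∧ chordLength C x = j).card

/-- The endpoints of chords of `C` of length at least `k`. -/
noncomputable def lenAtLeast (n k : ℕ) (C : ChordDiagram n) : Finset (Fin (2*n)) :=
  Finset.univ.filter fun x => k ≤ chordLength C x

/-- The number of chords with endpoints in `S` crossing the chord containing `x`. -/
noncomputable def degreeIn {n : ℕ} (C : ChordDiagram n) (S : Finset (Fin (2*n)))
    (x : Fin (2*n)) : ℕ :=
  (S.filter fun u => u < C.1 u ∧ Crosses C x u).card

/-- `S` (a chord-closed set of endpoints) is a set of chords each crossing at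
least `k` other chords of `S`. -/
def IsCore {n : ℕ} (C : ChordDiagram n) (k : ℕ) (S : Finset (Fin (2*n))) : Prop :=
  (∀ x ∈ S, C.1 x ∈ S) ∧ ∀ x ∈ S, k ≤ degreeIn C S x

/-- The `k`-core: the union of all sets of chords in which every chord crosses
at least `k` other chords of the set. -/
noncomputable def kCore (n k : ℕ) (C : ChordDiagram n) : Finset (Fin (2*n)) :=
  Finset.univ.filter fun x => ∃ S : Finset (Fin (2*n)), IsCore C k S ∧ x ∈ S

/-- The number of chords in the `k`-core of `C`. -/
noncomputable def kCoreSize (n k : ℕ) (C : ChordDiagram n) : ℕ :=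
  ((kCore n k C).filter fun x => x < C.1 x).card

/-- `Z_k`: the number of chords of length strictly less than `k`. -/
noncomputable def shortCount (n k : ℕ) (C : ChordDiagram n) : ℕ :=
  (Finset.univ.filter fun x : Fin (2*n) => x < C.1 x ∧ chordLength C x < k).card

/-- `C` contains a balanced clique of size `m`: a set of `m` pairwise crossing
chords with exactly one endpoint in each of the `2m` blocks of length `⌊n/m⌋`. -/
def HasBalancedClique (n m : ℕ) (C : ChordDiagram n) : Prop :=
  ∃ S : Finset (Fin (2*n)),
    (∀ x ∈ S, C.1 x ∈ S) ∧
    (∀ x ∈ S, ∀ u ∈ S, u ≠ x → u ≠ C.1 x → Crosses C x u) ∧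
    (∀ t : ℕ, 1 ≤ t → t ≤ 2*m →
      (S.filter fun x => (t-1) * (n/m) ≤ (x:ℕ) ∧ (x:ℕ) < t * (n/m)).card = 1)

/-- An oriented chord diagram: a chord diagram together with auxiliary fair-coin
bits; the bit attached to a crossing pair of chords (indexed by their smaller
endpoints) decides which chord over-crosses the other. -/
abbrev OrientedChordDiagram (n : ℕ) := ChordDiagram n × (Fin (2*n) → Fin (2*n) → Bool)

/-- The smaller endpoint of the chord of `C` containing `x`. -/
def chordRep {n : ℕ} (C : ChordDiagram n) (x : Fin (2*n)) : Fin (2*n) := min x (C.1 x)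

/-- In the oriented diagram `D`, the chord containing `x` crosses and
over-crosses the chord containing `u`. -/
def OverD {n : ℕ} (D : OrientedChordDiagram n) (x u : Fin (2*n)) : Prop :=
  Crosses D.1 x u ∧
    ((chordRep D.1 x ≤ chordRep D.1 u ∧ D.2 (chordRep D.1 x) (chordRep D.1 u) = true) ∨
     (chordRep D.1 u < chordRep D.1 x ∧ D.2 (chordRep D.1 u) (chordRep D.1 x) = false))

/-- Uniform probability of an event over all oriented chord diagrams of size `n`
(this yields a uniformly random diagram with each crossing oriented by an
independent fair coin). -/
noncomputable def probD (n : ℕ) (E : OrientedChordDiagram n → Prop) : ℝ :=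
  ((Finset.univ.filter E).card : ℝ) /
    ((Finset.univ : Finset (OrientedChordDiagram n)).card : ℝ)

/-- The chords (given by their endpoints in `S`) are strongly connected in the
directed intersection graph of `D`, using only chords of `S`. -/
def StronglyConnectedIn {n : ℕ} (D : OrientedChordDiagram n) (S : Set (Fin (2*n))) : Prop :=
  ∀ c ∈ S, ∀ d ∈ S,
    Relation.ReflTransGen (fun a b => a ∈ S ∧ b ∈ S ∧ OverD D a b) c d

/-- The number of chords with both endpoints in the cyclic block
`{i, i+1, …, i+t-1}` (mod `2n`). -/
noncomputable def chordsInBlock (n : ℕ) (C : ChordDiagram n) (i t : ℕ) : ℕ :=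
  (Finset.univ.filter fun x : Fin (2*n) => x < C.1 x ∧
    (∃ a < t, (x:ℕ) = (i + a) % (2*n)) ∧ (∃ a < t, ((C.1 x : ℕ)) = (i + a) % (2*n))).card

/-- The chord of `x` reaches the chord of `u` in the directed intersection graph
(of the whole diagram); endpoints of the same chord represent the same vertex. -/
def ReachChord {n : ℕ} (D : OrientedChordDiagram n) (x u : Fin (2*n)) : Prop :=
  u = x ∨ u = D.1.1 x ∨ Relation.ReflTransGen (fun a b => OverD D a b) x u

/-- The chords of `x` and `u` lie in the same strong component. -/
def MutualReach {n : ℕ} (D : OrientedChordDiagram n) (x u : Fin (2*n)) : Prop :=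
  ReachChord D x u ∧ ReachChord D u x

/-- The number of single-chord strong components of `D`. -/
noncomputable def singleCount (n : ℕ) (D : OrientedChordDiagram n) : ℕ :=
  (Finset.univ.filter fun x : Fin (2*n) =>
    x < D.1.1 x ∧ ∀ u : Fin (2*n), u ≠ x → u ≠ D.1.1 x → ¬ MutualReach D x u).card

/-
A set `S` of endpoints is closed when the chords of `C` match `S` with itself. If `x` is not in the
component of the root, then the maximal interval around `x` avoiding that component is closed: a
chord leaving this interval would separate an endpoint of the root component from the root, so some
chord of that component would cross it. Hence a diagram that is not monolithic has either a closed
block of `2k` consecutive endpoints that avoids the root, with `2 ≤ k < n`, or a closed cyclic block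
of `4` endpoints.

Relabelling endpoints shows that the probability that `S` is closed depends only on `#S = 2k`, and a
diagram has at most `n.choose k` closed sets of that size, one for each set of `k` chords. Counting
pairs of a diagram and a closed set, this probability is at most
`n.choose k / (2 * n).choose (2 * k) ≤ 1 / n.choose k`. Summing over the blocks gives `O(1 / n)`.
-/

theorem choose_le_choose_of_add_le {n j k : ℕ} (hjk : j ≤ k) (hkn : k + j ≤ n) :
    n.choose j ≤ n.choose k := by
  induction n generalizing j k with
  | zero => simp [show j = 0 by lia, show k = 0 by lia]
  | succ n ih =>
    obtain rfl | hjk := hjk.eq_or_lt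
    · rfl
    obtain hkn | hkn := hkn.eq_or_lt
    · exact (Nat.choose_symm_of_eq_add (by lia)).le
    obtain ⟨k, rfl⟩ : ∃ l, k = l + 1 := ⟨k - 1, by lia⟩
    cases j with
    | zero => exact Nat.choose_pos (by lia)
    | succ j =>
      rw [Nat.choose_succ_succ, Nat.choose_succ_succ]
      exact add_le_add (ih (by lia) (by lia)) (ih (by lia) (by lia))

theorem choose_sq_le_choose_two_mul (n k : ℕ) : n.choose k ^ 2 ≤ (2 * n).choose (2 * k) := by
  rw [two_mul n, Nat.add_choose_eq, sq]
  exact Finset.single_le_sum (f := fun p : ℕ × ℕ => n.choose p.1 * n.choose p.2)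
    (fun _ _ => Nat.zero_le _) (show (k, k) ∈ antidiagonal (2 * k) by simp [two_mul])

theorem cast_choose_three (n : ℕ) : (n.choose 3 : ℝ) = n * (n - 1) * (n - 2) / 6 := by
  rw [Nat.cast_choose_eq_descPochhammer_div]
  simp [descPochhammer_succ_right, Nat.factorial]

theorem sum_Ico_three_sub_div_choose_le (m : ℕ) :
    ∑ k ∈ Ico 3 (m + 3), ((m + 5 : ℝ) - k) / (m + 5).choose k ≤ 6 / (m + 4) := by
  have hchoose : ((m + 5).choose 3 : ℝ) = (m + 5) * (m + 4) * (m + 3) / 6 := by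
    rw [cast_choose_three]
    push_cast
    ring
  calc _ ≤ ∑ _k ∈ Ico 3 (m + 3), (m + 5 : ℝ) / (m + 5).choose 3 := by
        refine sum_le_sum fun k hk => ?_
        rw [mem_Ico] at hk
        have hle := choose_le_choose_of_add_le (n := m + 5) hk.1 (by lia)
        gcongr
        · exact Nat.cast_pos.2 (Nat.choose_pos (by lia))
        · exact sub_le_self _ k.cast_nonneg
    _ = m / (m + 3) * (6 / (m + 4)) := by
        rw [sum_const, Nat.card_Ico, nsmul_eq_mul, hchoose]
        push_cast
        field_simp
    _ ≤ 6 / (m + 4) := by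
        refine mul_le_of_le_one_left (by positivity) ?_
        exact div_le_one_of_le₀ (by linarith) (by positivity)

theorem sum_sub_div_choose_le {n : ℕ} (hn : 5 ≤ n) :
    ∑ k ∈ Ico 2 n, ((n : ℝ) - k) / n.choose k ≤ 9 / (n - 1) := by
  obtain ⟨m, rfl⟩ : ∃ m, n = m + 5 := ⟨n - 5, by lia⟩
  have hlast : (1 : ℝ) / (m + 5) ≤ 1 / (m + 4) := by gcongr; norm_num
  have hends : (m + 3 : ℝ) / (m + 5).choose 2 + 2 / (m + 5).choose 2 = 2 / (m + 4) := by
    have hchoose : ((m + 5).choose 2 : ℝ) = (m + 5) * (m + 4) / 2 := by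
      rw [Nat.cast_choose_two]
      push_cast
      ring
    rw [hchoose]
    field_simp
    ring
  have hsymm : (m + 5).choose (m + 3) = (m + 5).choose 2 := Nat.choose_symm_of_eq_add rfl
  calc ∑ k ∈ Ico 2 (m + 5), (((m + 5 : ℕ) : ℝ) - k) / (m + 5).choose k
      = (m + 3) / (m + 5).choose 2 + 2 / (m + 5).choose 2 +
          ∑ k ∈ Ico 3 (m + 3), ((m + 5 : ℝ) - k) / (m + 5).choose k + 1 / (m + 5) := by
        rw [sum_eq_sum_Ico_succ_bot (by lia), sum_Ico_succ_top (by lia), sum_Ico_succ_top (by lia),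
          hsymm, Nat.choose_succ_self_right]
        push_cast
        ring
    _ ≤ 2 / (m + 4) + 6 / (m + 4) + 1 / (m + 4) :=
        add_le_add (add_le_add hends.le (sum_Ico_three_sub_div_choose_le m)) hlast
    _ = 9 / (((m + 5 : ℕ) : ℝ) - 1) := by
        push_cast
        ring

theorem exists_eq_Icc_of_ordConnected {α : Type*} [LinearOrder α] {s : Set α} (hs : s.OrdConnected)
    (hfin : s.Finite) (hne : s.Nonempty) : ∃ a b, s = Set.Icc a b := by
  obtain ⟨a, ha, hmin⟩ := Set.exists_min_image s id hfin hne
  obtain ⟨b, hb, hmax⟩ := Set.exists_max_image s id hfin hne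
  exact ⟨a, b, Set.Subset.antisymm (fun x hx => ⟨hmin x hx, hmax x hx⟩) (hs.out ha hb)⟩

section Involution

variable {α : Type*} [LinearOrder α] {f : α → α}

theorem two_mul_card_filter_lt (hf : f.Involutive) (hfix : ∀ x, f x ≠ x) {S : Finset α}
    (hS : Set.MapsTo f S S) : 2 * #{x ∈ S | x < f x} = #S := by
  have hswap : #{x ∈ S | x < f x} = #{x ∈ S | ¬ x < f x} := by
    refine card_nbij' f f ?_ ?_ (fun x _ => hf x) (fun x _ => hf x)
    · intro x hx
      simp only [coe_filter, Set.mem_ofPred_eq, hf x] at hx ⊢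
      exact ⟨hS hx.1, hx.2.not_gt⟩
    · intro x hx
      simp only [coe_filter, Set.mem_ofPred_eq, hf x] at hx ⊢
      exact ⟨hS hx.1, (hfix x).lt_of_le (not_lt.1 hx.2)⟩
  rw [← card_filter_add_card_filter_not (s := S) (fun x => x < f x), ← hswap, two_mul]

theorem subset_of_filter_lt_subset (hf : f.Involutive) (hfix : ∀ x, f x ≠ x) {S T : Finset α}
    (hS : Set.MapsTo f S S) (hT : Set.MapsTo f T T) (hST : {x ∈ S | x < f x} ⊆ T) : S ⊆ T := by
  intro x hx
  rcases (hfix x).lt_or_gt with h | h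
  · have := hT (hST (mem_filter.2 ⟨hS hx, by rwa [hf]⟩))
    rwa [hf] at this
  · exact hST (mem_filter.2 ⟨hx, h⟩)

theorem card_filter_mapsTo_le_choose [Fintype α] (hf : f.Involutive) (hfix : ∀ x, f x ≠ x)
    {n : ℕ} (hn : Fintype.card α = 2 * n) (k : ℕ) :
    #{S ∈ powersetCard (2 * k) univ | Set.MapsTo f (S : Finset α) S} ≤ n.choose k := by
  have hchords : #{x | x < f x} = n := by
    have := two_mul_card_filter_lt hf hfix (S := univ) (by simp)
    rw [card_univ, hn] at this
    lia
  rw [← hchords, ← card_powersetCard]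
  refine card_le_card_of_injOn (fun S => {x ∈ S | x < f x}) ?_ ?_
  · intro S hS
    simp only [coe_filter, mem_powersetCard_univ, Set.mem_ofPred_eq] at hS
    have := two_mul_card_filter_lt hf hfix hS.2
    exact mem_powersetCard.2 ⟨filter_subset_filter _ (subset_univ S), by lia⟩
  · intro S hS T hT hST
    simp only [coe_filter, Set.mem_ofPred_eq] at hS hT hST
    refine Subset.antisymm ?_ ?_
    · exact subset_of_filter_lt_subset hf hfix hS.2 hT.2 (hST ▸ filter_subset _ _)
    · exact subset_of_filter_lt_subset hf hfix hT.2 hS.2 (hST ▸ filter_subset _ _)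

end Involution

namespace ChordDiagram

variable {n : ℕ}

instance : Nonempty (ChordDiagram n) :=
  ⟨⟨Fin.rev, Fin.rev_rev, fun i h => by
    have := congrArg Fin.val h
    rw [Fin.val_rev] at this
    lia⟩⟩

/-- The chord diagram obtained from `C` by moving each endpoint `i` to `σ i`, so that a set closed
under `C` is moved to a set closed under `relabel σ C`. -/
def relabel (σ : Equiv.Perm (Fin (2 * n))) (C : ChordDiagram n) : ChordDiagram n :=
  ⟨fun i => σ (C.1 (σ.symm i)), fun i => by simp [C.2.1], fun i h => C.2.2 (σ.symm i) (by
    rw [← Equiv.eq_symm_apply] at h; exact h)⟩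

theorem relabel_injective (σ : Equiv.Perm (Fin (2 * n))) : Function.Injective (relabel σ) := by
  intro C D h
  ext i : 2
  simpa [relabel] using congrFun (congrArg Subtype.val h) (σ i)

theorem card_mapsTo_le_of_card_eq {S T : Finset (Fin (2 * n))} (h : #S = #T) :
    #{C : ChordDiagram n | Set.MapsTo C.1 S S} ≤ #{C : ChordDiagram n | Set.MapsTo C.1 T T} := by
  obtain ⟨σ, hσ⟩ : ∃ σ : Equiv.Perm (Fin (2 * n)), ∀ x, σ x ∈ T ↔ x ∈ S :=
    let e : {x // x ∈ S} ≃ {x // x ∈ T} := equivOfCardEq h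
    ⟨e.extendSubtype, fun x =>
      ⟨fun hx => by_contra fun hxS => e.extendSubtype_not_mem x hxS hx, e.extendSubtype_mem x⟩⟩
  refine card_le_card_of_injOn (relabel σ) ?_ (relabel_injective σ).injOn
  intro C hC
  simp only [coe_filter, mem_univ, true_and, Set.mem_ofPred_eq] at hC ⊢
  exact fun x hx => (hσ _).2 (hC ((hσ _).1 (by simpa using hx)))

theorem card_mapsTo_mul_choose_le {k : ℕ} (hk : k ≤ n) {S : Finset (Fin (2 * n))}
    (hS : #S = 2 * k) :
    #{C : ChordDiagram n | Set.MapsTo C.1 S S} * n.choose k ≤ Fintype.card (ChordDiagram n) := by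
  set N := #{C : ChordDiagram n | Set.MapsTo C.1 S S}
  have hcount : (2 * n).choose (2 * k) * N ≤ Fintype.card (ChordDiagram n) * n.choose k := by
    have := card_mul_le_card_mul (fun (T : Finset (Fin (2 * n))) (C : ChordDiagram n) =>
      Set.MapsTo C.1 T T) (s := powersetCard (2 * k) univ) (t := univ) (m := N)
      (n := n.choose k)
      (fun T hT => card_mapsTo_le_of_card_eq (by rw [hS, (mem_powersetCard.1 hT).2]))
      (fun C _ => card_filter_mapsTo_le_choose C.2.1 C.2.2 (by simp) k)
    simpa [card_powersetCard] using this
  refine Nat.le_of_mul_le_mul_right ?_ (Nat.choose_pos hk)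
  calc N * n.choose k * n.choose k = n.choose k ^ 2 * N := by ring
    _ ≤ (2 * n).choose (2 * k) * N := Nat.mul_le_mul_right _ (choose_sq_le_choose_two_mul n k)
    _ ≤ _ := hcount

end ChordDiagram

section Crossing

variable {n : ℕ} {C : ChordDiagram n} {r x y a b : Fin (2 * n)}

theorem crosses_iff :
    Crosses C x y ↔ ¬ (Between x (C.1 x) y ↔ Between x (C.1 x) (C.1 y)) :=
  xor_iff_not_iff _ _

theorem not_crosses_self : ¬ Crosses C x x := by
  simp [crosses_iff, Between, and_comm]

theorem not_crosses_partner : ¬ Crosses C x (C.1 x) := by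
  simp [crosses_iff, Between, C.2.1, and_comm]

theorem Crosses.symm (h : Crosses C x y) : Crosses C y x := by
  have hyx : y ≠ x := by
    rintro rfl
    exact not_crosses_self h
  have hyx' : y ≠ C.1 x := by
    rintro rfl
    exact not_crosses_partner h
  have hxy' : C.1 y ≠ x := fun h => hyx' (h ▸ (C.2.1 y).symm)
  have hxy : C.1 y ≠ C.1 x := fun h => hyx (Function.Involutive.injective C.2.1 h)
  rw [crosses_iff] at h ⊢
  generalize C.1 x = x' at *
  generalize C.1 y = y' at *
  simp only [ne_eq, Fin.ext_iff, Between, Fin.lt_def, Fin.coe_min, Fin.coe_max] at *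
  omega

theorem Crosses.partner_right (h : Crosses C x y) : Crosses C x (C.1 y) := by
  rw [crosses_iff] at h ⊢
  rwa [C.2.1, Iff.comm]

theorem Crosses.partner_left (h : Crosses C x y) : Crosses C (C.1 x) y := by
  rw [crosses_iff] at h ⊢
  simpa only [Between, C.2.1, min_comm, max_comm] using h

theorem between_iff_between_of_separated {m : ℕ} {l u p q s t : Fin m} (hp : ¬ Between l u p)
    (hq : ¬ Between l u q) (hs : Between l u s) (ht : Between l u t) :
    Between p q s ↔ Between p q t := by
  simp only [Between, Fin.lt_def, Fin.coe_min, Fin.coe_max] at *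
  omega

theorem inRootComponent_iff :
    InRootComponent C r x ↔ x = C.1 r ∨ Relation.ReflTransGen (Crosses C) r x :=
  ⟨fun h => h.elim (fun hx => .inr (hx ▸ .refl)) id, .inr⟩

theorem InRootComponent.of_crosses (hx : InRootComponent C r x) (hxy : Crosses C x y) :
    InRootComponent C r y := by
  rw [inRootComponent_iff] at hx ⊢
  rcases hx with rfl | hx
  · exact .inr (.single (by simpa [C.2.1] using hxy.partner_left))
  · exact .inr (hx.tail hxy)

theorem InRootComponent.partner (hx : InRootComponent C r x) : InRootComponent C r (C.1 x) := by
  rw [inRootComponent_iff] at hx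
  rcases hx with rfl | hx
  · exact .inl (C.2.1 r)
  · obtain rfl | ⟨c, hc, hcx⟩ := hx.cases_tail
    · exact .inr (.inl rfl)
    · exact .inr (.inr (hc.tail hcx.partner_right))

theorem inRootComponent_partner_iff : InRootComponent C r (C.1 x) ↔ InRootComponent C r x :=
  ⟨fun h => C.2.1 x ▸ h.partner, .partner⟩

theorem InRootComponent.between_iff (hx : InRootComponent C r x) (hy : ¬ InRootComponent C r y) :
    Between y (C.1 y) x ↔ Between y (C.1 y) (C.1 x) := by
  by_contra h
  exact hy (hx.of_crosses (Crosses.symm (crosses_iff.2 h)))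

theorem InRootComponent.not_between (hr : IsMin r) (hx : InRootComponent C r x)
    (hy : ¬ InRootComponent C r y) : ¬ Between y (C.1 y) x := by
  have hroot : ¬ Between y (C.1 y) r := fun h => hr.not_lt h.1
  rcases inRootComponent_iff.1 hx with rfl | h
  · exact fun h => hroot ((InRootComponent.between_iff (.inl rfl) hy).2 h)
  clear hx
  induction h with
  | refl => exact hroot
  | tail hra hab ih =>
    have ha : InRootComponent C r _ := .inr (.inr hra)
    intro hb
    exact crosses_iff.1 hab (between_iff_between_of_separated ih
      (fun h => ih ((ha.between_iff hy).2 h)) hb (((ha.of_crosses hab).between_iff hy).1 hb))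

theorem mapsTo_ordConnectedComponent_compl_inRootComponent (hr : IsMin r) (x : Fin (2 * n)) :
    Set.MapsTo C.1 (Set.ordConnectedComponent {y | ¬ InRootComponent C r y} x)
      (Set.ordConnectedComponent {y | ¬ InRootComponent C r y} x) := by
  intro y hxy p hp
  rw [Set.mem_ordConnectedComponent] at hxy
  have hy : ¬ InRootComponent C r y := hxy Set.right_mem_uIcc
  rcases Set.uIcc_subset_uIcc_union_uIcc hp with hp | hp
  · exact hxy hp
  · intro hpr
    obtain rfl | hne := eq_or_ne p y
    · exact hy hpr
    obtain rfl | hne' := eq_or_ne p (C.1 y)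
    · exact hy (inRootComponent_partner_iff.1 hpr)
    refine hpr.not_between hr hy ⟨hp.1.lt_of_ne ?_, hp.2.lt_of_ne ?_⟩ <;> grind

theorem exists_mapsTo_Icc_of_not_inRootComponent (hr : IsMin r) (hx : ¬ InRootComponent C r x) :
    ∃ a b, r < a ∧ x ∈ Icc a b ∧ Set.MapsTo C.1 (Icc a b) (Icc a b) := by
  set I := Set.ordConnectedComponent {y | ¬ InRootComponent C r y} x
  have hxI : x ∈ I := Set.self_mem_ordConnectedComponent.2 hx
  have hrI : r ∉ I := fun h => Set.ordConnectedComponent_subset h (.inl rfl)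
  obtain ⟨a, b, hab⟩ := exists_eq_Icc_of_ordConnected (s := I) inferInstance
    I.toFinite ⟨x, hxI⟩
  have hclosed : Set.MapsTo C.1 I I := mapsTo_ordConnectedComponent_compl_inRootComponent hr x
  rw [hab] at hxI hrI hclosed
  refine ⟨a, b, ?_, by simpa using hxI, by simpa using hclosed⟩
  by_contra har
  exact hrI ⟨not_lt.1 har, (hr.isBot x).trans hxI.2⟩

theorem isSimple_of_mapsTo_Icc (hx : x ∈ Icc a b) (hC : Set.MapsTo C.1 (Icc a b) (Icc a b))
    (hab : (b : ℕ) ≤ a + 1) : IsSimple C x := by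
  have hCx := hC hx
  have hne : (C.1 x : ℕ) ≠ x := fun h => C.2.2 x (Fin.ext h)
  simp only [coe_Icc, Set.mem_Icc, mem_Icc, Fin.le_def] at hx hCx
  unfold IsSimple
  rcases hne.lt_or_gt with h | h
  · right
    rw [Nat.mod_eq_of_lt] <;> lia
  · left
    rw [Nat.mod_eq_of_lt] <;> lia

end Crossing

section CyclicBlock

/-- The cyclic block of the `t` endpoints `i, i + 1, …, i + t - 1`, taken modulo `m`: an arc
of the circle with `m` endpoints, possibly passing through the root. It is meant for `t ≤ m`, and
the start `i` need not be reduced modulo `m`. -/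
def cyclicBlock (m i t : ℕ) : Finset (Fin m) :=
  {x | (x : ℕ) ∈ (Ico i (i + t)).image (· % m)}

theorem mem_cyclicBlock {m i t : ℕ} {x : Fin m} :
    x ∈ cyclicBlock m i t ↔ ∃ j, (i ≤ j ∧ j < i + t) ∧ j % m = x := by
  simp [cyclicBlock]

theorem card_cyclicBlock {m t : ℕ} (ht : t ≤ m) (i : ℕ) : #(cyclicBlock m i t) = t := by
  have hmap : (cyclicBlock m i t).map Fin.valEmbedding = (Ico i (i + t)).image (· % m) := by
    ext j
    simp only [Finset.mem_map, mem_cyclicBlock, Fin.valEmbedding_apply, mem_image, mem_Ico]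
    constructor
    · rintro ⟨x, hx, rfl⟩
      exact hx
    · rintro ⟨l, hl, rfl⟩
      exact ⟨⟨l % m, Nat.mod_lt _ (by lia)⟩, ⟨l, hl, rfl⟩, rfl⟩
  have hinj : Set.InjOn (· % m) (Ico i (i + t) : Set ℕ) :=
    (Nat.mod_injOn_Ico i m).mono (by
      rw [coe_subset]
      exact Ico_subset_Ico_right (by lia))
  rw [← card_map Fin.valEmbedding, hmap, card_image_of_injOn hinj, Nat.card_Ico,
    Nat.add_sub_cancel_left]

theorem Icc_eq_cyclicBlock {m t : ℕ} {a b : Fin m} (hab : (b : ℕ) + 1 = a + t) :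
    Icc a b = cyclicBlock m a t := by
  ext x
  rw [mem_Icc, mem_cyclicBlock]
  simp only [Fin.le_def]
  constructor
  · exact fun hx => ⟨x, by lia, Nat.mod_eq_of_lt x.isLt⟩
  · rintro ⟨j, hj, hjx⟩
    rw [Nat.mod_eq_of_lt (by lia)] at hjx
    lia

theorem mapsTo_cyclicBlock_four {n : ℕ} {C : ChordDiagram n} {i j : Fin (2 * n)}
    (hi : (C.1 i : ℕ) = (i + 1) % (2 * n)) (hj : (j : ℕ) = (i + 2) % (2 * n))
    (hj' : (C.1 j : ℕ) = (i + 3) % (2 * n)) :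
    Set.MapsTo C.1 (cyclicBlock (2 * n) i 4) (cyclicBlock (2 * n) i 4) := by
  have hblock : ∀ x, x ∈ cyclicBlock (2 * n) i 4 ↔ x = i ∨ x = C.1 i ∨ x = j ∨ x = C.1 j := by
    intro x
    simp only [Fin.ext_iff, hi, hj, hj', mem_cyclicBlock]
    constructor
    · rintro ⟨s, hs, hsx⟩
      obtain ⟨d, hd, rfl⟩ : ∃ d < 4, s = i + d := ⟨s - i, by lia, by lia⟩
      rw [← hsx]
      interval_cases d <;> simp [Nat.mod_eq_of_lt]
    · have := Nat.mod_eq_of_lt i.isLt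
      rintro (h | h | h | h)
      · exact ⟨i, by lia, by lia⟩
      all_goals exact ⟨_, by lia, h.symm⟩
  intro x hx
  rw [mem_coe, hblock] at hx ⊢
  rcases hx with rfl | rfl | rfl | rfl <;> simp [C.2.1]

end CyclicBlock

section Monolithic

variable {n : ℕ} {C : ChordDiagram n}

theorem exists_mapsTo_cyclicBlock_of_not_isSimple {r x : Fin (2 * n)} (hr : IsMin r)
    (hx : ¬ InRootComponent C r x) (hsimple : ¬ IsSimple C x) :
    ∃ k ∈ Ico 2 n, ∃ a ∈ Icc 1 (2 * (n - k)),
      Set.MapsTo C.1 (cyclicBlock (2 * n) a (2 * k)) (cyclicBlock (2 * n) a (2 * k)) := by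
  obtain ⟨a, b, hra, hxab, hC⟩ := exists_mapsTo_Icc_of_not_inRootComponent hr hx
  have hlong : (a : ℕ) + 1 < b := by
    by_contra hab
    exact hsimple (isSimple_of_mapsTo_Icc hxab hC (not_lt.1 hab))
  obtain ⟨k, hk⟩ : ∃ k, (b : ℕ) + 1 = a + 2 * k := by
    have := two_mul_card_filter_lt C.2.1 C.2.2 (S := Icc a b) (by simpa using hC)
    rw [Fin.card_Icc] at this
    exact ⟨#{x ∈ Icc a b | x < C.1 x}, by lia⟩
  have hapos : 0 < (a : ℕ) := (Nat.zero_le _).trans_lt hra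
  refine ⟨k, mem_Ico.2 ⟨by lia, by lia⟩, a, mem_Icc.2 ⟨hapos, by lia⟩, ?_⟩
  rwa [← Icc_eq_cyclicBlock hk]

theorem exists_mapsTo_cyclicBlock_of_not_monolithic {r : Fin (2 * n)} (hr : IsMin r)
    (hC : ¬ Monolithic C r) :
    (∃ k ∈ Ico 2 n, ∃ a ∈ Icc 1 (2 * (n - k)),
      Set.MapsTo C.1 (cyclicBlock (2 * n) a (2 * k)) (cyclicBlock (2 * n) a (2 * k))) ∨
    ∃ i ∈ range (2 * n), Set.MapsTo C.1 (cyclicBlock (2 * n) i 4) (cyclicBlock (2 * n) i 4) := by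
  rw [Monolithic, not_and_or, not_not] at hC
  rcases hC with hC | ⟨i, hi, j, hj, hj'⟩
  · push Not at hC
    obtain ⟨x, hx, hsimple⟩ := hC
    exact .inl (exists_mapsTo_cyclicBlock_of_not_isSimple hr hx hsimple)
  · exact .inr ⟨i, mem_range.2 i.isLt, mapsTo_cyclicBlock_four hi hj hj'⟩

end Monolithic

section Prob

variable {n : ℕ} {E F : ChordDiagram n → Prop}

theorem prob_le_one : prob n E ≤ 1 :=
  div_le_one_of_le₀ (Nat.cast_le.2 (card_filter_le _ _)) (Nat.cast_nonneg _)

theorem prob_not : prob n (fun C => ¬ E C) = 1 - prob n E := by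
  have hcard : (#(univ : Finset (ChordDiagram n)) : ℝ) ≠ 0 :=
    Nat.cast_ne_zero.2 univ_nonempty.card_ne_zero
  rw [eq_sub_iff_add_eq, prob, prob, ← add_div, add_comm, ← Nat.cast_add,
    card_filter_add_card_filter_not, div_self hcard]

theorem prob_mono (h : ∀ C, E C → F C) : prob n E ≤ prob n F := by
  unfold prob
  gcongr
  exact h _

theorem prob_or_le : prob n (fun C => E C ∨ F C) ≤ prob n E + prob n F := by
  unfold prob
  rw [← add_div, ← Nat.cast_add]
  gcongr
  refine le_trans (card_le_card ?_) (card_union_le _ _)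
  intro C
  simp

theorem prob_exists_mem_le {ι : Type*} (s : Finset ι) (A : ι → ChordDiagram n → Prop) :
    prob n (fun C => ∃ i ∈ s, A i C) ≤ ∑ i ∈ s, prob n (A i) := by
  unfold prob
  rw [← sum_div, ← Nat.cast_sum]
  gcongr
  refine le_trans (card_le_card ?_) card_biUnion_le
  intro C
  simp

theorem prob_mapsTo_le {k : ℕ} (hk : k ≤ n) {S : Finset (Fin (2 * n))} (hS : #S = 2 * k) :
    prob n (fun C => Set.MapsTo C.1 S S) ≤ 1 / n.choose k := by
  rw [prob, card_univ, div_le_div_iff₀ (Nat.cast_pos.2 Fintype.card_pos)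
    (Nat.cast_pos.2 (Nat.choose_pos hk)), one_mul,
    ← Nat.cast_mul, Nat.cast_le]
  convert ChordDiagram.card_mapsTo_mul_choose_le hk hS

theorem prob_exists_mapsTo_cyclicBlock_le {k : ℕ} (hk : k ≤ n) (s : Finset ℕ) :
    prob n (fun C => ∃ a ∈ s,
      Set.MapsTo C.1 (cyclicBlock (2 * n) a (2 * k)) (cyclicBlock (2 * n) a (2 * k)))
      ≤ #s / n.choose k := by
  refine (prob_exists_mem_le _ _).trans ?_
  calc _ ≤ ∑ _a ∈ s, (1 : ℝ) / n.choose k :=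
        sum_le_sum fun _ _ => prob_mapsTo_le hk (card_cyclicBlock (by lia) _)
    _ = #s / n.choose k := by rw [sum_const, nsmul_eq_mul, mul_one_div]

theorem prob_exists_mapsTo_cyclicBlock_off_root_le (hn : 5 ≤ n) :
    prob n (fun C => ∃ k ∈ Ico 2 n, ∃ a ∈ Icc 1 (2 * (n - k)),
      Set.MapsTo C.1 (cyclicBlock (2 * n) a (2 * k)) (cyclicBlock (2 * n) a (2 * k)))
      ≤ 18 / (n - 1) := by
  refine (prob_exists_mem_le _ _).trans ?_
  calc _ ≤ ∑ k ∈ Ico 2 n, 2 * (((n : ℝ) - k) / n.choose k) := by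
        refine sum_le_sum fun k hk => ?_
        have hkn : k ≤ n := (mem_Ico.1 hk).2.le
        refine (prob_exists_mapsTo_cyclicBlock_le hkn _).trans_eq ?_
        rw [Nat.card_Icc, Nat.add_sub_cancel, Nat.cast_mul, Nat.cast_sub hkn, mul_div_assoc,
          Nat.cast_ofNat]
    _ ≤ 2 * (9 / (n - 1)) := by
        rw [← mul_sum]
        exact mul_le_mul_of_nonneg_left (sum_sub_div_choose_le hn) zero_le_two
    _ = 18 / (n - 1) := by ring

theorem prob_exists_mapsTo_cyclicBlock_four_le (hn : 2 ≤ n) :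
    prob n (fun C => ∃ i ∈ range (2 * n),
      Set.MapsTo C.1 (cyclicBlock (2 * n) i 4) (cyclicBlock (2 * n) i 4)) ≤ 4 / (n - 1) := by
  refine (prob_exists_mapsTo_cyclicBlock_le hn _).trans_eq ?_
  have hn' : (n : ℝ) - 1 ≠ 0 := sub_ne_zero.2 (by exact_mod_cast (show n ≠ 1 by lia))
  have hn0 : (n : ℝ) ≠ 0 := by exact_mod_cast (show n ≠ 0 by lia)
  rw [card_range, Nat.cast_choose_two]
  push_cast
  field_simp
  norm_num

theorem prob_not_monolithic_le (hn : 5 ≤ n) {r : Fin (2 * n)} (hr : IsMin r) :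
    prob n (fun C => ¬ Monolithic C r) ≤ 22 / (n - 1) :=
  calc _ ≤ _ := prob_mono fun _ => exists_mapsTo_cyclicBlock_of_not_monolithic hr
    _ ≤ 18 / (n - 1) + 4 / (n - 1) := prob_or_le.trans
        (add_le_add (prob_exists_mapsTo_cyclicBlock_off_root_le hn)
          (prob_exists_mapsTo_cyclicBlock_four_le (by lia)))
    _ = 22 / (n - 1) := by ring

end Prob

theorem stmt2 :
    Filter.Tendsto
      (fun n : ℕ => prob n (fun C => ∀ h : 0 < 2*n, Monolithic C ⟨0, h⟩))
      Filter.atTop (nhds 1) := by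
  have hlim : Tendsto (fun n : ℕ => 1 - 22 / ((n : ℝ) - 1)) atTop (nhds 1) := by
    have hden : Tendsto (fun n : ℕ => (n : ℝ) - 1) atTop atTop :=
      tendsto_atTop_add_const_right _ (-1) tendsto_natCast_atTop_atTop
    simpa using tendsto_const_nhds.sub (hden.const_div_atTop 22)
  refine tendsto_of_tendsto_of_tendsto_of_le_of_le' hlim tendsto_const_nhds ?_
    (.of_forall fun n => prob_le_one)
  filter_upwards [eventually_ge_atTop 5] with n hn
  have hpos : 0 < 2 * n := by lia
  have hr : IsMin (⟨0, hpos⟩ : Fin (2 * n)) := fun i _ => Nat.zero_le i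
  simp only [hpos, forall_true_left]
  linarith [prob_not_monolithic_le hn hr, prob_not (E := fun C => Monolithic C ⟨0, hpos⟩)]
end

section
/- Fix an integer j ≥ 0 and let L_j denote the number of chords of length j in the uniformly random chord diagram C_n of size n. Then L_j converges in distribution to a Poisson random variable with mean 1 as n→∞; that is, for every integer m ≥ 0, lim_{n→∞} P(L_j = m) = e^{−1}/m!. -/
open scoped Classical
open Finset Filter

/-!
Method of binomial moments. For a random perfect matching of `N` points let `X` be the number of
its edges that lie in a fixed graph with `E` edges, and let `b r` be the mean of `X.choose r`, so
that `b r` sums, over the sets `S` of `r` edges of the graph, the probability that the matching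
extends `S`. Relabelling the points not covered by `S` is a symmetry of the extensions of `S`, so
each further disjoint edge is present with conditional probability `1 / (N - (2 * r + 1))`. Of the
`E` edges at most `2 * r * maxDegree` meet `S`, whence
`(N - (2 * r + 1)) * (r + 1) * b (r + 1) = (E + O(maxDegree)) * b r`.
If `E / N → a` and `maxDegree / N → 0` then `b r → a ^ r / r !`, and by the Bonferroni
inequalities these limits determine the limit law, which is Poisson with mean `a`.
The chords of length `j` are the edges that a diagram shares with a graph on `2 * n` points which
is `2`-regular for large `n`; there `E = N`, so `a = 1`.
-/

open MeasureTheory ProbabilityTheory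
open scoped Topology Nat

section PoissonCriterion

theorem choose_mul_choose_add (L m k : ℕ) :
    (m + k).choose m * L.choose (m + k) = L.choose m * (L - m).choose k := by
  have h := Nat.choose_mul (n := L) (Nat.le_add_right m k)
  rwa [Nat.add_sub_cancel_left, mul_comm] at h

theorem sum_alternating_choose_mul_choose (L m K : ℕ) :
    ∑ k ∈ range (K + 1), (-1 : ℝ) ^ k * ((m + k).choose m * L.choose (m + k)) =
      L.choose m * ∑ k ∈ range (K + 1), (-1 : ℝ) ^ k * (L - m).choose k := by
  rw [mul_sum]
  refine sum_congr rfl fun k _ => ?_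
  have h : ((m + k).choose m * L.choose (m + k) : ℝ) = L.choose m * (L - m).choose k := by
    exact_mod_cast choose_mul_choose_add L m k
  rw [h, mul_left_comm]

theorem abs_sum_alternating_choose_succ_le (n K : ℕ) :
    |∑ k ∈ range (K + 1), (-1 : ℝ) ^ k * (n + 1).choose k| ≤ (n + 1).choose (K + 1) := by
  have h : ∑ k ∈ range (K + 1), (-1 : ℝ) ^ k * (n + 1).choose k = (-1) ^ K * n.choose K := by
    exact_mod_cast Int.alternating_sum_range_choose_eq_choose (n := n) (m := K)
  rw [h, abs_mul, abs_pow, abs_neg, abs_one, one_pow, one_mul, Nat.abs_cast, Nat.choose_succ_succ]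
  exact_mod_cast Nat.le_add_right _ _

/-- Bonferroni's inequality: truncating inclusion-exclusion costs at most the first omitted
term. -/
theorem abs_sum_alternating_sub_ite_le (L m K : ℕ) :
    |∑ k ∈ range (K + 1), (-1 : ℝ) ^ k * ((m + k).choose m * L.choose (m + k)) -
        if L = m then 1 else 0| ≤ (m + (K + 1)).choose m * L.choose (m + (K + 1)) := by
  have hbound : ((m + (K + 1)).choose m * L.choose (m + (K + 1)) : ℝ) =
      L.choose m * (L - m).choose (K + 1) := by
    exact_mod_cast choose_mul_choose_add L m (K + 1)
  rw [sum_alternating_choose_mul_choose, hbound]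
  obtain hL | rfl | hL := lt_trichotomy L m
  · simp [Nat.choose_eq_zero_of_lt hL, hL.ne]
  · simp [sum_range_succ']
  · obtain ⟨n, hn⟩ := Nat.exists_eq_add_of_lt hL
    rw [if_neg hL.ne', sub_zero, abs_mul, Nat.abs_cast, show L - m = n + 1 by omega]
    gcongr
    exact abs_sum_alternating_choose_succ_le n K

theorem tendsto_of_dist_le {ι κ E : Type*} [PseudoMetricSpace E] {l : Filter ι} {l' : Filter κ}
    [l'.NeBot] {p : ι → E} {T : κ → ι → E} {R : κ → ι → ℝ} {t : κ → E} {r : κ → ℝ} {a : E}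
    (hle : ∀ k i, dist (p i) (T k i) ≤ R k i) (hT : ∀ k, Tendsto (T k) l (𝓝 (t k)))
    (hR : ∀ k, Tendsto (R k) l (𝓝 (r k))) (ht : Tendsto t l' (𝓝 a)) (hr : Tendsto r l' (𝓝 0)) :
    Tendsto p l (𝓝 a) := by
  rw [Metric.tendsto_nhds]
  intro ε hε
  have hsmall : Tendsto (fun k => r k + dist (t k) a) l' (𝓝 0) := by
    simpa using hr.add (tendsto_iff_dist_tendsto_zero.1 ht)
  obtain ⟨k, hk⟩ := (hsmall.eventually_lt_const hε).exists
  have hlim : Tendsto (fun i => R k i + dist (T k i) a) l (𝓝 (r k + dist (t k) a)) :=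
    (hR k).add ((hT k).dist tendsto_const_nhds)
  filter_upwards [hlim.eventually_lt_const hk] with i hi
  calc dist (p i) a ≤ dist (p i) (T k i) + dist (T k i) a := dist_triangle _ _ _
    _ ≤ R k i + dist (T k i) a := by gcongr; exact hle k i
    _ < ε := hi

theorem abs_measureReal_sub_sum_integral_choose_le {Ω : Type*} [MeasurableSpace Ω] {μ : Measure Ω}
    {X : Ω → ℕ} (hX : Measurable X) (hint : ∀ r, Integrable (fun ω => ((X ω).choose r : ℝ)) μ)
    (m K : ℕ) :
    |μ.real {ω | X ω = m} - ∑ k ∈ range (K + 1),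
        (-1 : ℝ) ^ k * ((m + k).choose m * ∫ ω, ((X ω).choose (m + k) : ℝ) ∂μ)| ≤
      (m + (K + 1)).choose m * ∫ ω, ((X ω).choose (m + (K + 1)) : ℝ) ∂μ := by
  have hmeas : MeasurableSet {ω | X ω = m} := hX (measurableSet_singleton m)
  have hite : {ω | X ω = m}.indicator 1 = fun ω => if X ω = m then (1 : ℝ) else 0 := by
    ext ω
    simp only [Set.indicator_apply, Set.mem_ofPred_eq, Pi.one_apply]
  have hind : Integrable (fun ω => if X ω = m then (1 : ℝ) else 0) μ := by
    rw [← hite]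
    have hone : Integrable (fun _ => (1 : ℝ)) μ := by
      simpa only [Nat.choose_zero_right, Nat.cast_one] using hint 0
    exact hone.indicator hmeas
  have hterm (k : ℕ) : Integrable
      (fun ω => (-1 : ℝ) ^ k * ((m + k).choose m * (X ω).choose (m + k))) μ :=
    ((hint (m + k)).const_mul _).const_mul _
  rw [← integral_indicator_one hmeas, hite, abs_sub_comm, ← Real.norm_eq_abs]
  simp_rw [← integral_const_mul]
  rw [← integral_finsetSum _ fun k _ => hterm k,
    ← integral_sub (integrable_finsetSum _ fun k _ => hterm k) hind]
  exact norm_integral_le_of_norm_le ((hint _).const_mul _)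
    (.of_forall fun ω => abs_sum_alternating_sub_ite_le (X ω) m K)

theorem choose_add_mul_pow_div_factorial (a : ℝ) (m k : ℕ) :
    (m + k).choose m * (a ^ (m + k) / (m + k)!) = a ^ m / m ! * (a ^ k / k !) := by
  rw [Nat.cast_add_choose, pow_add]
  field_simp

theorem tendsto_measureReal_of_tendsto_integral_choose {ι : Type*} {l : Filter ι} {Ω : ι → Type*}
    [∀ i, MeasurableSpace (Ω i)] {μ : ∀ i, Measure (Ω i)} {X : ∀ i, Ω i → ℕ} {a : ℝ}
    (hX : ∀ i, Measurable (X i))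
    (hint : ∀ i r, Integrable (fun ω => ((X i ω).choose r : ℝ)) (μ i))
    (hlim : ∀ r, Tendsto (fun i => ∫ ω, ((X i ω).choose r : ℝ) ∂μ i) l (𝓝 (a ^ r / r !)))
    (m : ℕ) :
    Tendsto (fun i => (μ i).real {ω | X i ω = m}) l (𝓝 (Real.exp (-a) * a ^ m / m !)) := by
  refine tendsto_of_dist_le (l' := atTop)
    (fun K i => abs_measureReal_sub_sum_integral_choose_le (hX i) (hint i) m K)
    (fun K => tendsto_finsetSum _ fun k _ => ((hlim (m + k)).const_mul _).const_mul _)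
    (fun K => (hlim (m + (K + 1))).const_mul _) ?_ ?_
  · have hexp : Tendsto (fun K => ∑ k ∈ range (K + 1), (-a) ^ k / k !) atTop
        (𝓝 (Real.exp (-a))) := by
      rw [Real.exp_eq_exp_ℝ]
      exact (NormedSpace.expSeries_div_hasSum_exp (-a)).tendsto_sum_nat.comp
        (tendsto_add_atTop_nat 1)
    convert hexp.const_mul (a ^ m / m !) using 2 with K
    · rw [mul_sum]
      refine sum_congr rfl fun k _ => ?_
      rw [choose_add_mul_pow_div_factorial, neg_pow]
      ring
    · ring
  · simp_rw [choose_add_mul_pow_div_factorial]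
    simpa using ((FloorSemiring.tendsto_pow_div_factorial_atTop a).comp
      (tendsto_add_atTop_nat 1)).const_mul (a ^ m / m !)

end PoissonCriterion

section BinomialMoments

variable {Ω α : Type*} [Fintype Ω] [DecidableEq α]

theorem filter_subset_powersetCard (A E : Finset α) (r : ℕ) :
    {S ∈ powersetCard r E | S ⊆ A} = powersetCard r (E ∩ A) := by
  ext S
  simp only [mem_filter, mem_powersetCard, subset_inter_iff]
  tauto

theorem sum_choose_card_inter (F : Ω → Finset α) (E : Finset α) (r : ℕ) :
    ∑ ω, (#(E ∩ F ω)).choose r = ∑ S ∈ powersetCard r E, #{ω | S ⊆ F ω} := by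
  simp_rw [card_filter]
  rw [sum_comm]
  refine sum_congr rfl fun ω _ => ?_
  rw [← card_filter, filter_subset_powersetCard, card_powersetCard]

theorem succ_mul_sum_choose_succ_card_inter (F : Ω → Finset α) (E : Finset α) (r : ℕ) :
    (r + 1) * ∑ ω, (#(E ∩ F ω)).choose (r + 1) =
      ∑ S ∈ powersetCard r E, ∑ e ∈ E \ S, #{ω | insert e S ⊆ F ω} := by
  have hcount (ω : Ω) (S : Finset α) (hS : S ∈ powersetCard r E) :
      #{e ∈ E \ S | insert e S ⊆ F ω} = if S ⊆ F ω then #(E ∩ F ω) - r else 0 := by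
    rw [mem_powersetCard] at hS
    split_ifs with hSF
    · rw [← hS.2, ← card_sdiff_of_subset (subset_inter hS.1 hSF)]
      congr 1
      ext e
      simp only [mem_filter, Finset.mem_sdiff, Finset.mem_inter, insert_subset_iff]
      tauto
    · rw [card_eq_zero, filter_eq_empty_iff]
      exact fun e _ h => hSF (insert_subset_iff.1 h).2
  simp_rw [card_filter _ univ]
  rw [mul_sum, sum_congr rfl fun S _ => sum_comm, sum_comm]
  refine sum_congr rfl fun ω _ => ?_
  rw [mul_comm, Nat.choose_succ_right_eq]
  simp_rw [← card_filter]
  rw [sum_congr rfl (hcount ω), ← sum_filter, sum_const, smul_eq_mul, filter_subset_powersetCard,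
    card_powersetCard]

end BinomialMoments

section EdgeSets

variable {V : Type*} [DecidableEq V]

/-- The points covered by a set of edges. -/
def endpoints (S : Finset (Sym2 V)) : Finset V := S.biUnion Sym2.toFinset

theorem mem_endpoints {S : Finset (Sym2 V)} {v : V} : v ∈ endpoints S ↔ ∃ e ∈ S, v ∈ e := by
  simp only [endpoints, mem_biUnion, Sym2.mem_toFinset]

theorem card_edgeFinset_le_card_filter_add [Fintype V] (G : SimpleGraph V)
    [DecidableRel G.Adj] (T : Finset V) :
    #G.edgeFinset ≤ #{e ∈ G.edgeFinset | ∀ v ∈ e, v ∉ T} + #T * G.maxDegree := by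
  have hcover : {e ∈ G.edgeFinset | ¬ ∀ v ∈ e, v ∉ T} ⊆ T.biUnion fun v => G.incidenceFinset v := by
    intro e he
    obtain ⟨heG, hv⟩ := mem_filter.1 he
    push Not at hv
    obtain ⟨v, hve, hvT⟩ := hv
    exact mem_biUnion.2 ⟨v, hvT, by
      rw [SimpleGraph.mem_incidenceFinset]; exact ⟨SimpleGraph.mem_edgeFinset.1 heG, hve⟩⟩
  have hle : #{e ∈ G.edgeFinset | ¬ ∀ v ∈ e, v ∉ T} ≤ #T * G.maxDegree :=
    (card_le_card hcover).trans <| card_biUnion_le_card_mul _ _ _ fun v _ => by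
      rw [G.card_incidenceFinset_eq_degree]; exact G.degree_le_maxDegree v
  rw [← card_filter_add_card_filter_not (s := G.edgeFinset) fun e => ∀ v ∈ e, v ∉ T]
  exact Nat.add_le_add_left hle _

end EdgeSets

/-- Perfect matchings of the points of `V`, encoded as fixed-point-free involutions, so that
`ChordDiagram n` unfolds to `PerfectMatching (Fin (2 * n))`. -/
abbrev PerfectMatching (V : Type*) := {f : V → V // (∀ i, f (f i) = i) ∧ ∀ i, f i ≠ i}

namespace PerfectMatching

variable {V : Type*}

/-- The image of a matching under a relabelling `σ` of the points; it is used to show that all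
points not yet matched are equally likely partners of a given point. -/
def conj (σ : Equiv.Perm V) : PerfectMatching V ≃ PerfectMatching V :=
  σ.conj.subtypeEquiv fun f =>
    and_congr (σ.forall_congr fun i => by simp) (σ.forall_congr fun i => by simp)

variable [Fintype V] [DecidableEq V]

/-- The set of edges of a matching. -/
def edges (C : PerfectMatching V) : Finset (Sym2 V) := univ.image fun v => s(v, C.1 v)

theorem mk_mem_edges {C : PerfectMatching V} {a b : V} : s(a, b) ∈ C.edges ↔ C.1 a = b := by
  simp only [edges, mem_image, mem_univ, true_and, Sym2.eq_iff]
  constructor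
  · rintro ⟨v, ⟨rfl, hb⟩ | ⟨rfl, ha⟩⟩
    · exact hb
    · rw [← ha, C.2.1]
  · exact fun h => ⟨a, .inl ⟨rfl, h⟩⟩

theorem eq_mk_of_mem_edges {C : PerfectMatching V} {e : Sym2 V} {v : V} (he : e ∈ C.edges)
    (hv : v ∈ e) : e = s(v, C.1 v) := by
  obtain ⟨w, rfl⟩ := hv
  rw [mk_mem_edges.1 he]

theorem not_isDiag_of_mem_edges {C : PerfectMatching V} {e : Sym2 V} (he : e ∈ C.edges) :
    ¬ e.IsDiag := by
  obtain ⟨v, -, rfl⟩ := mem_image.1 he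
  exact (C.2.2 v).symm

theorem map_mem_edges_conj {σ : Equiv.Perm V} {C : PerfectMatching V} {e : Sym2 V} :
    e.map σ ∈ (conj σ C).edges ↔ e ∈ C.edges := by
  induction e with
  | _ a b => simp [mk_mem_edges, conj, Equiv.conj_apply]

theorem card_endpoints {C : PerfectMatching V} {S : Finset (Sym2 V)} (hS : S ⊆ C.edges) :
    #(endpoints S) = 2 * #S := by
  have hdisj : (S : Set (Sym2 V)).PairwiseDisjoint Sym2.toFinset := by
    intro e he e' he' hne
    refine disjoint_left.2 fun v hv hv' => hne ?_
    rw [Sym2.mem_toFinset] at hv hv'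
    rw [eq_mk_of_mem_edges (hS he) hv, eq_mk_of_mem_edges (hS he') hv']
  rw [endpoints, card_biUnion hdisj,
    sum_const_nat fun e he => Sym2.card_toFinset_of_not_isDiag e (not_isDiag_of_mem_edges (hS he)),
    mul_comm]

/-- The perfect matchings extending the partial matching `S`. -/
def extensions (S : Finset (Sym2 V)) : Finset (PerfectMatching V) := {C | S ⊆ C.edges}

theorem mem_extensions {S : Finset (Sym2 V)} {C : PerfectMatching V} :
    C ∈ extensions S ↔ S ⊆ C.edges := by
  simp only [extensions, mem_filter, mem_univ, true_and]

theorem extensions_insert_mk (S : Finset (Sym2 V)) (a b : V) :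
    extensions (insert s(a, b) S) = {C ∈ extensions S | C.1 a = b} := by
  ext C
  simp only [mem_filter, mem_extensions, insert_subset_iff, mk_mem_edges, and_comm]

theorem conj_mem_extensions_iff {S : Finset (Sym2 V)} {σ : Equiv.Perm V}
    (hσ : ∀ v ∈ endpoints S, σ v = v) (C : PerfectMatching V) :
    conj σ C ∈ extensions S ↔ C ∈ extensions S := by
  rw [mem_extensions, mem_extensions]
  refine forall₂_congr fun e he => ?_
  have hfix : e.map σ = e :=
    (Sym2.map_congr fun v hv => hσ v (mem_endpoints.2 ⟨e, he, hv⟩)).trans (congrFun Sym2.map_id' e)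
  nth_rw 1 [← hfix]
  exact map_mem_edges_conj

theorem card_filter_apply_eq_of_notMem {S : Finset (Sym2 V)} {a b b' : V}
    (hb : b ∉ insert a (endpoints S)) (hb' : b' ∉ insert a (endpoints S)) :
    #{C ∈ extensions S | C.1 a = b} = #{C ∈ extensions S | C.1 a = b'} := by
  have hfix {v : V} (hv : v ∈ insert a (endpoints S)) : Equiv.swap b b' v = v :=
    Equiv.swap_apply_of_ne_of_ne (ne_of_mem_of_not_mem hv hb) (ne_of_mem_of_not_mem hv hb')
  refine card_equiv (conj (Equiv.swap b b')) fun C => ?_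
  have hpartner : (conj (Equiv.swap b b') C).1 a = Equiv.swap b b' (C.1 a) := by
    nth_rw 1 [← hfix (mem_insert_self a _)]
    simp [conj, Equiv.conj_apply]
  rw [mem_filter, mem_filter, conj_mem_extensions_iff fun v hv => hfix (mem_insert_of_mem hv),
    hpartner, Equiv.swap_apply_eq_iff, Equiv.swap_apply_right]

theorem apply_notMem_insert_endpoints {S : Finset (Sym2 V)} {C : PerfectMatching V}
    (hC : C ∈ extensions S) {a : V} (ha : a ∉ endpoints S) :
    C.1 a ∉ insert a (endpoints S) := by
  rw [mem_insert, not_or, mem_endpoints]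
  refine ⟨C.2.2 a, fun ⟨e, he, hv⟩ => ha (mem_endpoints.2 ⟨e, he, ?_⟩)⟩
  rw [eq_mk_of_mem_edges (mem_extensions.1 hC he) hv, C.2.1]
  exact Sym2.mem_mk_right _ _

theorem mul_card_extensions_insert {S : Finset (Sym2 V)} {e : Sym2 V} (he : ¬ e.IsDiag)
    (hS : ∀ v ∈ e, v ∉ endpoints S) :
    (Fintype.card V - (2 * #S + 1)) * #(extensions (insert e S)) = #(extensions S) := by
  -- The subtraction truncates only if `S` has no extension, and then both sides vanish.
  obtain hempty | ⟨C₀, hC₀⟩ := (extensions S).eq_empty_or_nonempty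
  · have hsub : extensions (insert e S) ⊆ extensions S := fun C hC =>
      mem_extensions.2 ((subset_insert e S).trans (mem_extensions.1 hC))
    rw [hempty, subset_empty] at hsub
    rw [hempty, hsub, card_empty, mul_zero]
  induction e with
  | _ a b =>
    have ha : a ∉ endpoints S := hS a (Sym2.mem_mk_left a b)
    have hb : b ∉ insert a (endpoints S) :=
      mem_insert.not.2 (not_or.2 ⟨fun h => he h.symm, hS b (Sym2.mem_mk_right a b)⟩)
    have hcard : #(insert a (endpoints S))ᶜ = Fintype.card V - (2 * #S + 1) := by
      rw [card_compl, card_insert_of_notMem ha, card_endpoints (mem_extensions.1 hC₀)]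
    rw [extensions_insert_mk, ← hcard, ← smul_eq_mul, ← sum_const,
      card_eq_sum_card_fiberwise (f := fun C : PerfectMatching V => C.1 a)
        fun C hC => mem_coe.2 (mem_compl.2 (apply_notMem_insert_endpoints hC ha))]
    exact sum_congr rfl fun w hw => card_filter_apply_eq_of_notMem hb (mem_compl.1 hw)

theorem extensions_insert_eq_empty {S : Finset (Sym2 V)} {e : Sym2 V} {v : V} (he : e ∉ S)
    (hve : v ∈ e) (hvS : v ∈ endpoints S) : extensions (insert e S) = ∅ := by
  refine eq_empty_of_forall_notMem fun C hC => he ?_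
  obtain ⟨heC, hSC⟩ := insert_subset_iff.1 (mem_extensions.1 hC)
  obtain ⟨e', he', hve'⟩ := mem_endpoints.1 hvS
  rwa [eq_mk_of_mem_edges heC hve, ← eq_mk_of_mem_edges (hSC he') hve']

theorem mul_sum_card_extensions_insert {E S : Finset (Sym2 V)} (hE : ∀ e ∈ E, ¬ e.IsDiag) :
    (Fintype.card V - (2 * #S + 1)) * ∑ e ∈ E \ S, #(extensions (insert e S)) =
      #{e ∈ E | ∀ v ∈ e, v ∉ endpoints S} * #(extensions S) := by
  have hterm : ∀ e ∈ E \ S, (Fintype.card V - (2 * #S + 1)) * #(extensions (insert e S)) =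
      if ∀ v ∈ e, v ∉ endpoints S then #(extensions S) else 0 := by
    intro e he
    obtain ⟨heE, heS⟩ := Finset.mem_sdiff.1 he
    split_ifs with hv
    · exact mul_card_extensions_insert (hE e heE) hv
    · push Not at hv
      obtain ⟨v, hve, hvS⟩ := hv
      rw [extensions_insert_eq_empty heS hve hvS, card_empty, mul_zero]
  have hfilter : {e ∈ E \ S | ∀ v ∈ e, v ∉ endpoints S} = {e ∈ E | ∀ v ∈ e, v ∉ endpoints S} := by
    ext e
    simp only [mem_filter, Finset.mem_sdiff, and_assoc]
    refine and_congr_right fun _ => and_iff_right_of_imp fun hv heS => ?_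
    exact hv _ e.out_fst_mem (mem_endpoints.2 ⟨e, heS, e.out_fst_mem⟩)
  rw [mul_sum, sum_congr rfl hterm, ← sum_filter, sum_const, smul_eq_mul, hfilter]

/-- The number of edges shared by a perfect matching and a graph; for the graph of all pairs
of points at a given distance this is `lengthCount`. -/
def commonEdgeCount (G : SimpleGraph V) [DecidableRel G.Adj] (C : PerfectMatching V) : ℕ :=
  #(G.edgeFinset ∩ C.edges)

section Moments

variable (G : SimpleGraph V) [DecidableRel G.Adj] (r : ℕ)

theorem sum_choose_commonEdgeCount :
    ∑ C, (commonEdgeCount G C).choose r = ∑ S ∈ powersetCard r G.edgeFinset, #(extensions S) :=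
  sum_choose_card_inter edges G.edgeFinset r

theorem mul_sum_choose_succ_commonEdgeCount :
    (Fintype.card V - (2 * r + 1)) * ((r + 1) * ∑ C, (commonEdgeCount G C).choose (r + 1)) =
      ∑ S ∈ powersetCard r G.edgeFinset,
        #{e ∈ G.edgeFinset | ∀ v ∈ e, v ∉ endpoints S} * #(extensions S) := by
  have hcount : (r + 1) * ∑ C, (commonEdgeCount G C).choose (r + 1) =
      ∑ S ∈ powersetCard r G.edgeFinset, ∑ e ∈ G.edgeFinset \ S, #(extensions (insert e S)) :=
    succ_mul_sum_choose_succ_card_inter edges G.edgeFinset r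
  rw [hcount, mul_sum]
  refine sum_congr rfl fun S hS => ?_
  rw [← mul_sum_card_extensions_insert fun e => G.not_isDiag_of_mem_edgeFinset,
    (mem_powersetCard.1 hS).2]

theorem mul_sum_choose_succ_commonEdgeCount_le :
    (Fintype.card V - (2 * r + 1)) * ((r + 1) * ∑ C, (commonEdgeCount G C).choose (r + 1)) ≤
      #G.edgeFinset * ∑ C, (commonEdgeCount G C).choose r := by
  rw [mul_sum_choose_succ_commonEdgeCount, sum_choose_commonEdgeCount, mul_sum]
  exact sum_le_sum fun S _ => Nat.mul_le_mul_right _ (card_filter_le _ _)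

theorem card_edgeFinset_mul_sum_choose_commonEdgeCount_le :
    #G.edgeFinset * ∑ C, (commonEdgeCount G C).choose r ≤
      (Fintype.card V - (2 * r + 1)) * ((r + 1) * ∑ C, (commonEdgeCount G C).choose (r + 1)) +
        2 * r * G.maxDegree * ∑ C, (commonEdgeCount G C).choose r := by
  rw [mul_sum_choose_succ_commonEdgeCount, sum_choose_commonEdgeCount, mul_sum, mul_sum,
    ← sum_add_distrib]
  refine sum_le_sum fun S hS => ?_
  rw [← add_mul]
  obtain hempty | ⟨C, hC⟩ := (extensions S).eq_empty_or_nonempty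
  · simp only [hempty, card_empty, mul_zero, le_refl]
  · have hcard : #(endpoints S) = 2 * r := by
      rw [card_endpoints (mem_extensions.1 hC), (mem_powersetCard.1 hS).2]
    rw [← hcard]
    exact Nat.mul_le_mul_right _ (card_edgeFinset_le_card_filter_add G _)

end Moments

end PerfectMatching

section UniformMeasure

variable {Ω : Type*} [Fintype Ω] [MeasurableSpace Ω] [MeasurableSingletonClass Ω]

theorem measureReal_uniformOn_univ (s : Finset Ω) :
    (uniformOn (Set.univ : Set Ω)).real s = (#s : ℝ) / Fintype.card Ω := by
  rw [measureReal_def, uniformOn_univ, Measure.count_apply_finset, ENNReal.toReal_div,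
    ENNReal.toReal_natCast, ENNReal.toReal_natCast]

theorem integral_uniformOn_univ (f : Ω → ℝ) :
    ∫ ω, f ω ∂uniformOn (Set.univ : Set Ω) = (∑ ω, f ω) / Fintype.card Ω := by
  rw [integral_fintype .of_finite, sum_div]
  refine sum_congr rfl fun ω _ => ?_
  rw [← coe_singleton, measureReal_uniformOn_univ, card_singleton, smul_eq_mul]
  ring

end UniformMeasure

theorem tendsto_natCast_sub_div_natCast (k : ℕ) :
    Tendsto (fun n : ℕ => ((n - k : ℕ) : ℝ) / n) atTop (𝓝 1) := by
  have hlim : Tendsto (fun n : ℕ => 1 - (k : ℝ) / n) atTop (𝓝 1) := by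
    simpa using tendsto_const_nhds.sub (tendsto_const_div_atTop_nhds_zero_nat (k : ℝ))
  refine hlim.congr' ?_
  filter_upwards [eventually_ge_atTop k, eventually_gt_atTop 0] with n hkn hn
  rw [Nat.cast_sub hkn, sub_div, div_self (Nat.cast_pos.2 hn).ne']

namespace PerfectMatching

section CommonEdgeMoment

variable {V : Type*} [Fintype V] [DecidableEq V] [MeasurableSpace V] (G : SimpleGraph V)
  [DecidableRel G.Adj]

/-- The `r`-th binomial moment `𝔼[X.choose r]` of the number `X` of edges that a uniformly random
perfect matching shares with `G`. -/
noncomputable def commonEdgeMoment (r : ℕ) : ℝ :=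
  ∫ C, ((commonEdgeCount G C).choose r : ℝ) ∂uniformOn (Set.univ : Set (PerfectMatching V))

variable [MeasurableSingletonClass V]

theorem commonEdgeMoment_eq (r : ℕ) :
    commonEdgeMoment G r =
      (∑ C, (commonEdgeCount G C).choose r : ℕ) / Fintype.card (PerfectMatching V) := by
  rw [commonEdgeMoment, integral_uniformOn_univ, Nat.cast_sum]

theorem commonEdgeMoment_zero [Nonempty (PerfectMatching V)] : commonEdgeMoment G 0 = 1 := by
  have := isProbabilityMeasure_uniformOn Set.finite_univ
    (Set.univ_nonempty (α := PerfectMatching V))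
  simp only [commonEdgeMoment, Nat.choose_zero_right, Nat.cast_one, integral_const, probReal_univ,
    smul_eq_mul, mul_one]

theorem mul_commonEdgeMoment_succ_le (r : ℕ) :
    ((Fintype.card V - (2 * r + 1) : ℕ) : ℝ) / Fintype.card V *
        ((r + 1) * commonEdgeMoment G (r + 1)) ≤
      #G.edgeFinset / Fintype.card V * commonEdgeMoment G r := by
  have h : ((Fintype.card V - (2 * r + 1) : ℕ) : ℝ) *
        ((r + 1) * (∑ C, (commonEdgeCount G C).choose (r + 1) : ℕ)) ≤
      #G.edgeFinset * (∑ C, (commonEdgeCount G C).choose r : ℕ) := by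
    exact_mod_cast mul_sum_choose_succ_commonEdgeCount_le G r
  rw [commonEdgeMoment_eq, commonEdgeMoment_eq, ← mul_div_assoc, div_mul_div_comm,
    div_mul_div_comm]
  gcongr

theorem le_mul_commonEdgeMoment_succ (r : ℕ) :
    ((#G.edgeFinset / Fintype.card V : ℝ) - 2 * r * (G.maxDegree / Fintype.card V)) *
        commonEdgeMoment G r ≤
      ((Fintype.card V - (2 * r + 1) : ℕ) : ℝ) / Fintype.card V *
        ((r + 1) * commonEdgeMoment G (r + 1)) := by
  have h : (#G.edgeFinset - 2 * r * G.maxDegree : ℝ) *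
        (∑ C, (commonEdgeCount G C).choose r : ℕ) ≤
      ((Fintype.card V - (2 * r + 1) : ℕ) : ℝ) *
        ((r + 1) * (∑ C, (commonEdgeCount G C).choose (r + 1) : ℕ)) := by
    rw [sub_mul, sub_le_iff_le_add]
    exact_mod_cast card_edgeFinset_mul_sum_choose_commonEdgeCount_le G r
  rw [commonEdgeMoment_eq, commonEdgeMoment_eq, ← mul_div_assoc (2 * r : ℝ), ← sub_div,
    ← mul_div_assoc (r + 1 : ℝ), div_mul_div_comm, div_mul_div_comm]
  gcongr

end CommonEdgeMoment

section PoissonLimit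

variable {ι : Type*} {l : Filter ι} {V : ι → Type*} [∀ i, Fintype (V i)] [∀ i, DecidableEq (V i)]
  [∀ i, MeasurableSpace (V i)] [∀ i, MeasurableSingletonClass (V i)]
  [∀ i, Nonempty (PerfectMatching (V i))] {G : ∀ i, SimpleGraph (V i)}
  [∀ i, DecidableRel (G i).Adj] {a : ℝ}

theorem tendsto_commonEdgeMoment (hcard : Tendsto (fun i => Fintype.card (V i)) l atTop)
    (hedges : Tendsto (fun i => (#(G i).edgeFinset / Fintype.card (V i) : ℝ)) l (𝓝 a))
    (hdegree : Tendsto (fun i => ((G i).maxDegree / Fintype.card (V i) : ℝ)) l (𝓝 0)) (r : ℕ) :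
    Tendsto (fun i => commonEdgeMoment (G i) r) l (𝓝 (a ^ r / r !)) := by
  induction r with
  | zero => simpa [commonEdgeMoment_zero] using tendsto_const_nhds
  | succ r ih =>
    have hratio : Tendsto (fun i => ((Fintype.card (V i) - (2 * r + 1) : ℕ) : ℝ) /
        Fintype.card (V i)) l (𝓝 1) := (tendsto_natCast_sub_div_natCast (2 * r + 1)).comp hcard
    have hlower : Tendsto (fun i => ((#(G i).edgeFinset / Fintype.card (V i) : ℝ) -
        2 * r * ((G i).maxDegree / Fintype.card (V i))) * commonEdgeMoment (G i) r) l
        (𝓝 (a * (a ^ r / r !))) := by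
      simpa using (hedges.sub (hdegree.const_mul (2 * r : ℝ))).mul ih
    have hscaled := tendsto_of_tendsto_of_tendsto_of_le_of_le hlower (hedges.mul ih)
      (fun i => le_mul_commonEdgeMoment_succ (G i) r)
      (fun i => mul_commonEdgeMoment_succ_le (G i) r)
    convert (hscaled.div hratio one_ne_zero).div_const ((r : ℝ) + 1) |>.congr' ?_ using 2
    · rw [Nat.factorial_succ, Nat.cast_mul, Nat.cast_succ, pow_succ]
      field_simp
    · filter_upwards [hratio.eventually_ne one_ne_zero] with i hi
      have hr : (r : ℝ) + 1 ≠ 0 := by positivity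
      simp only [Pi.div_apply]
      rw [mul_div_cancel_left₀ _ hi, mul_div_cancel_left₀ _ hr]

theorem tendsto_measureReal_commonEdgeCount_eq
    (hcard : Tendsto (fun i => Fintype.card (V i)) l atTop)
    (hedges : Tendsto (fun i => (#(G i).edgeFinset / Fintype.card (V i) : ℝ)) l (𝓝 a))
    (hdegree : Tendsto (fun i => ((G i).maxDegree / Fintype.card (V i) : ℝ)) l (𝓝 0)) (m : ℕ) :
    Tendsto (fun i => (uniformOn (Set.univ : Set (PerfectMatching (V i)))).real
      {C | commonEdgeCount (G i) C = m}) l (𝓝 (Real.exp (-a) * a ^ m / m !)) :=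
  tendsto_measureReal_of_tendsto_integral_choose (fun _ => .of_discrete) (fun _ _ => .of_finite)
    (tendsto_commonEdgeMoment hcard hedges hdegree) m

end PoissonLimit

end PerfectMatching

section ArcLengthGraph

/-- The graph on `N` cyclically ordered points whose edges are the pairs of points such that the
smaller of the two arcs between them contains exactly `j` points. -/
def arcLengthGraph (N j : ℕ) : SimpleGraph (Fin N) where
  Adj x y := x ≠ y ∧
    min (max (x : ℕ) y - min (x : ℕ) y - 1) (N - (max (x : ℕ) y - min (x : ℕ) y) - 1) = j
  symm := ⟨fun x y h => by simpa only [ne_comm, max_comm, min_comm] using h⟩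
  loopless := ⟨fun x h => h.1 rfl⟩

variable {N j : ℕ}

theorem arcLengthGraph_isRegularOfDegree (hj : 2 * (j + 1) < N) :
    (arcLengthGraph N j).IsRegularOfDegree 2 := by
  intro x
  let succ : Fin N := ⟨if x + (j + 1) < N then x + (j + 1) else x + (j + 1) - N,
    by split_ifs <;> omega⟩
  let pred : Fin N := ⟨if j + 1 ≤ x then x - (j + 1) else x + N - (j + 1),
    by split_ifs <;> omega⟩
  have hne : succ ≠ pred := by
    simp only [succ, pred, ne_eq, Fin.mk.injEq]
    split_ifs <;> omega
  have hneighbors : (arcLengthGraph N j).neighborFinset x = {succ, pred} := by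
    ext y
    rw [SimpleGraph.mem_neighborFinset]
    simp only [arcLengthGraph, mem_insert, mem_singleton, succ, pred, ne_eq, Fin.ext_iff]
    split_ifs <;> omega
  rw [← SimpleGraph.card_neighborFinset_eq_degree, hneighbors, card_pair hne]

theorem card_edgeFinset_arcLengthGraph (hj : 2 * (j + 1) < N) :
    #(arcLengthGraph N j).edgeFinset = N := by
  have hsum := (arcLengthGraph N j).sum_degrees_eq_twice_card_edges
  simp only [(arcLengthGraph_isRegularOfDegree hj).degree_eq, sum_const, card_univ,
    Fintype.card_fin, smul_eq_mul] at hsum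
  omega

theorem maxDegree_arcLengthGraph_le (hj : 2 * (j + 1) < N) :
    (arcLengthGraph N j).maxDegree ≤ 2 :=
  (arcLengthGraph N j).maxDegree_le_of_forall_degree_le 2
    fun x => ((arcLengthGraph_isRegularOfDegree hj).degree_eq x).le

theorem tendsto_card_edgeFinset_arcLengthGraph_div (j : ℕ) :
    Tendsto (fun N => (#(arcLengthGraph N j).edgeFinset / Fintype.card (Fin N) : ℝ)) atTop
      (𝓝 1) := by
  refine tendsto_const_nhds.congr' ?_
  filter_upwards [eventually_gt_atTop (2 * (j + 1))] with N hN
  rw [card_edgeFinset_arcLengthGraph hN, Fintype.card_fin, div_self]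
  exact_mod_cast (Nat.zero_lt_of_lt hN).ne'

theorem tendsto_maxDegree_arcLengthGraph_div (j : ℕ) :
    Tendsto (fun N => ((arcLengthGraph N j).maxDegree / Fintype.card (Fin N) : ℝ)) atTop
      (𝓝 0) := by
  refine squeeze_zero' (.of_forall fun N => by positivity) ?_
    (tendsto_const_div_atTop_nhds_zero_nat (2 : ℝ))
  filter_upwards [eventually_gt_atTop (2 * (j + 1))] with N hN
  rw [Fintype.card_fin]
  exact div_le_div_of_nonneg_right (mod_cast maxDegree_arcLengthGraph_le hN) N.cast_nonneg

end ArcLengthGraph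

section ChordDiagram

instance (n : ℕ) : Nonempty (ChordDiagram n) :=
  ⟨Fin.rev, Fin.rev_rev, fun i h => by simp only [Fin.ext_iff, Fin.val_rev] at h; omega⟩

theorem lengthCount_eq_commonEdgeCount (n j : ℕ) (C : ChordDiagram n) :
    lengthCount n j C = PerfectMatching.commonEdgeCount (arcLengthGraph (2 * n) j) C := by
  have hmem (x : Fin (2 * n)) : s(x, C.1 x) ∈ (arcLengthGraph (2 * n) j).edgeFinset ↔
      chordLength C x = j :=
    SimpleGraph.mem_edgeFinset.trans (and_iff_right (C.2.2 x).symm)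
  refine card_bij (fun x _ => s(x, C.1 x)) (fun x hx => ?_) (fun x hx y hy h => ?_) fun e he => ?_
  · exact mem_inter.2 ⟨(hmem x).2 (mem_filter.1 hx).2.2, PerfectMatching.mk_mem_edges.2 rfl⟩
  · obtain ⟨hxy, -⟩ | ⟨hxy, hyx⟩ := Sym2.eq_iff.1 h
    · exact hxy
    · have hx' := (mem_filter.1 hx).2.1
      have hy' := (mem_filter.1 hy).2.1
      rw [hyx, hxy] at hx'
      exact absurd hx' hy'.asymm
  · obtain ⟨heG, heC⟩ := mem_inter.1 he
    obtain ⟨x, -, rfl⟩ := mem_image.1 heC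
    obtain hx | hx := lt_or_gt_of_ne (C.2.2 x).symm
    · exact ⟨x, mem_filter.2 ⟨mem_univ _, hx, (hmem x).1 heG⟩, rfl⟩
    · have hswap : s(C.1 x, C.1 (C.1 x)) = s(x, C.1 x) := by rw [C.2.1, Sym2.eq_swap]
      refine ⟨C.1 x, mem_filter.2 ⟨mem_univ _, by rwa [C.2.1], (hmem _).1 ?_⟩, hswap⟩
      rwa [hswap]

theorem prob_eq_measureReal (n : ℕ) (E : ChordDiagram n → Prop) :
    prob n E = (uniformOn (Set.univ : Set (ChordDiagram n))).real {C | E C} := by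
  rw [prob, ← coe_filter_univ, measureReal_uniformOn_univ, card_univ]

end ChordDiagram

theorem stmt3 (j : ℕ) (m : ℕ) :
    Filter.Tendsto
      (fun n : ℕ => prob n (fun C => lengthCount n j C = m))
      Filter.atTop (nhds (Real.exp (-1) / (m.factorial : ℝ))) := by
  have hpoints : Tendsto (fun n : ℕ => 2 * n) atTop atTop :=
    tendsto_id.const_mul_atTop' two_pos
  have hcard : Tendsto (fun n : ℕ => Fintype.card (Fin (2 * n))) atTop atTop := by
    simpa only [Fintype.card_fin] using hpoints
  simpa only [prob_eq_measureReal, lengthCount_eq_commonEdgeCount, one_pow, mul_one] using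
    PerfectMatching.tendsto_measureReal_commonEdgeCount_eq hcard
      ((tendsto_card_edgeFinset_arcLengthGraph_div j).comp hpoints)
      ((tendsto_maxDegree_arcLengthGraph_div j).comp hpoints) m
end
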